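/- arXiv:2110.07952 — 4 statements merged into one kernel-verified Lean document; each statement's English description precedes it below -/
import Mathlib

section
/- Let n ∈ ℕ, k ∈ ℕ with k ≥ 1, and let the coefficients A_l, l = 0, 1, …, (k−1)n, be defined by the polynomial identity (1 + x + ⋯ + x^{k−1})^n = Σ_{l=0}^{(k−1)n} A_l x^l. Then for every sequence ξ : ℤ → ℂ, every step μ ∈ ℤ and every m ∈ ℤ, one has ξ^{(n)}(m, kμ) = Σ_{l=0}^{(k−1)n} A_l · ξ^{(n)}(m − lμ, μ). -/
/-- The stochastic `n`-th increment of a sequence `ξ : ℤ → ℂ` with step `μ` at point `m`: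
`ξ^{(n)}(m, μ) = Σ_{l=0}^{n} (−1)^l C(n,l) ξ(m − lμ)`. -/
noncomputable def increment (ξ : ℤ → ℂ) (n : ℕ) (μ m : ℤ) : ℂ :=
  ∑ l ∈ Finset.range (n + 1), (-1 : ℂ) ^ l * (n.choose l : ℂ) * ξ (m - (l : ℤ) * μ)

/-- The shift operator by `μ`. -/
def shiftOp (μ : ℤ) : Module.End ℂ (ℤ → ℂ) where
  toFun f := fun m => f (m - μ)
  map_add' _ _ := rfl
  map_smul' _ _ := rfl

lemma shiftOp_pow (μ : ℤ) (l : ℕ) (f : ℤ → ℂ) (m : ℤ) :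
    ((shiftOp μ) ^ l) f m = f (m - (l : ℤ) * μ) := by
  induction l generalizing m with
  | zero => simp
  | succ l ih =>
    rw [pow_succ', Module.End.mul_apply]
    change ((shiftOp μ) ^ l) f (m - μ) = _
    rw [ih]
    congr 1
    push_cast
    ring

lemma increment_eq (ξ : ℤ → ℂ) (n : ℕ) (μ m : ℤ) :
    increment ξ n μ m = ((1 - shiftOp μ) ^ n) ξ m := by
  have h : (1 - shiftOp μ) ^ n = ∑ l ∈ Finset.range (n + 1),
      ((-1 : ℂ) ^ l * (n.choose l : ℂ)) • (shiftOp μ) ^ l := by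
    have h2 := congrArg (Polynomial.aeval (shiftOp μ))
      (add_pow (-Polynomial.X : Polynomial ℂ) 1 n)
    simp only [map_pow, map_add, map_neg, map_one, Polynomial.aeval_X, map_sum, map_mul,
      map_natCast, one_pow, mul_one] at h2
    rw [sub_eq_neg_add, h2]
    refine Finset.sum_congr rfl fun l _ => ?_
    rw [← Nat.cast_comm, ← nsmul_eq_mul, mul_comm, mul_smul, Nat.cast_smul_eq_nsmul]
    congr 1
    rcases Nat.even_or_odd l with e | e <;> simp [e.neg_one_pow] <;> exact e.neg_pow (shiftOp μ)
  rw [h, increment]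
  simp [Finset.sum_apply, shiftOp_pow]

/-- if the coefficients `A l`, `l = 0, …, (k−1)n`, are defined by the polynomial
identity `(1 + x + ⋯ + x^{k−1})^n = Σ_{l=0}^{(k−1)n} A_l x^l`, then
`ξ^{(n)}(m, kμ) = Σ_{l=0}^{(k−1)n} A_l ξ^{(n)}(m − lμ, μ)`. -/
theorem increment_mul_step (n k : ℕ) (hk : 1 ≤ k) (A : ℕ → ℂ)
    (hA : (∑ j ∈ Finset.range k, (Polynomial.X : Polynomial ℂ) ^ j) ^ n
        = ∑ l ∈ Finset.range ((k - 1) * n + 1), Polynomial.C (A l) * Polynomial.X ^ l)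
    (ξ : ℤ → ℂ) (μ m : ℤ) :
    increment ξ n ((k : ℤ) * μ) m
      = ∑ l ∈ Finset.range ((k - 1) * n + 1), A l * increment ξ n μ (m - (l : ℤ) * μ) := by
  have h := congrArg (Polynomial.aeval (shiftOp μ)) hA
  simp only [map_pow, map_sum, map_mul, Polynomial.aeval_X, Polynomial.aeval_C] at h
  have hs : shiftOp ((k : ℤ) * μ) = (shiftOp μ) ^ k := by
    ext1 f
    funext m
    rw [shiftOp_pow]
    rfl
  have hg : (1 - (shiftOp μ) ^ k) ^ n
      = (∑ j ∈ Finset.range k, (shiftOp μ) ^ j) ^ n * (1 - shiftOp μ) ^ n := by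
    rw [← geom_sum_mul_neg, Commute.mul_pow]
    exact (Commute.sum_left _ _ _ fun j _ =>
      ((Commute.one_right _).sub_right ((Commute.refl _).pow_left j)))
  rw [increment_eq, hs, hg, h, Module.End.mul_apply]
  simp only [increment_eq, LinearMap.sum_apply, Finset.sum_apply, Module.End.mul_apply,
    Module.algebraMap_end_apply, Pi.smul_apply, shiftOp_pow, smul_eq_mul]
end

section
/- Let n ≥ 1 and let f : ℤ → ℂ be a function such that for every step μ ∈ ℤ the n-th μ-difference of f is independent of the base point, i.e. there is a function c^{(n)} : ℤ → ℂ with Σ_{l=0}^{n} (−1)^l C(n,l) f(m − lμ) = c^{(n)}(μ) for all m ∈ ℤ. Then there exists a constant c ∈ ℂ such that c^{(n)}(μ) = c · μ^n for every μ ∈ ℤ. -/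
noncomputable def shiftT : Module.End ℂ (ℤ → ℂ) := LinearMap.funLeft ℂ ℂ (fun m : ℤ => m - 1)

lemma shiftT_pow (k : ℕ) (f : ℤ → ℂ) (m : ℤ) : (shiftT ^ k) f m = f (m - k) := by
  induction k generalizing m with
  | zero => simp
  | succ k ih =>
    rw [pow_succ', Module.End.mul_apply]
    change (shiftT ^ k) f (m - 1) = _
    rw [ih]
    congr 1
    push_cast
    ring

lemma diff_pow (n k : ℕ) (f : ℤ → ℂ) (m : ℤ) :
    ((1 - shiftT ^ k) ^ n) f m =
      ∑ l ∈ Finset.range (n + 1), (-1 : ℂ) ^ l * (n.choose l : ℂ) * f (m - (l : ℤ) * (k : ℤ)) := by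
  have e : (1 - shiftT ^ k) = -(shiftT ^ k) + 1 := by abel
  rw [e, (Commute.one_right _).add_pow, LinearMap.sum_apply, Finset.sum_apply]
  refine Finset.sum_congr rfl fun l _ => ?_
  have e2 : (-(shiftT ^ k)) ^ l * 1 ^ (n - l) * ((n.choose l : ℕ) : Module.End ℂ (ℤ → ℂ))
      = ((-1 : ℂ) ^ l * (n.choose l : ℂ)) • shiftT ^ (l * k) := by
    rw [neg_pow (shiftT ^ k) l, one_pow, mul_one, ← pow_mul, mul_comm k l, ← Nat.cast_comm, ← nsmul_eq_mul,
      mul_comm ((-1 : ℂ) ^ l), mul_smul, Nat.cast_smul_eq_nsmul]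
    congr 1
    rcases neg_one_pow_eq_or ℂ l with h | h <;> rcases Nat.even_or_odd l with h' | h' <;>
      simp [h'.neg_one_pow]
  rw [e2, LinearMap.smul_apply, Pi.smul_apply, shiftT_pow, smul_eq_mul]
  push_cast
  rfl

lemma geom_const (k n : ℕ) (c : ℂ) :
    ((∑ i ∈ Finset.range k, shiftT ^ i) ^ n) (fun _ => c) = fun _ => c * (k : ℂ) ^ n := by
  induction n with
  | zero => simp
  | succ n ih =>
    rw [pow_succ', Module.End.mul_apply, ih]
    funext m
    rw [LinearMap.sum_apply, Finset.sum_apply]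
    simp only [shiftT_pow, Finset.sum_const, Finset.card_range, nsmul_eq_mul]
    ring


/-- if, for every step `μ`, the `n`-th `μ`-difference
`Σ_{l=0}^{n} (−1)^l C(n,l) f(m − lμ)` of `f : ℤ → ℂ` does not depend on the base point `m`,
being equal to `c^{(n)}(μ)`, then there is a constant `c` with `c^{(n)}(μ) = c · μ^n`. -/
theorem mean_value_of_stationary_increment (n : ℕ) (hn : 1 ≤ n) (f : ℤ → ℂ) (cn : ℤ → ℂ)
    (h : ∀ μ m : ℤ,
      ∑ l ∈ Finset.range (n + 1), (-1 : ℂ) ^ l * (n.choose l : ℂ) * f (m - (l : ℤ) * μ) = cn μ) :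
    ∃ c : ℂ, ∀ μ : ℤ, cn μ = c * (μ : ℂ) ^ n := by
  have hD (k : ℕ) : ((1 - shiftT ^ k) ^ n) f = fun _ => cn k := by
    funext m
    rw [diff_pow, h]
  have hnat (k : ℕ) : cn k = cn 1 * (k : ℂ) ^ n := by
    have h1 := hD 1
    have hk := hD k
    have hc : Commute (∑ i ∈ Finset.range k, shiftT ^ i) (1 - shiftT) :=
      (Commute.one_right _).sub_right
        (Commute.sum_left _ _ _ fun i _ => (Commute.refl shiftT).pow_left i)
    rw [← geom_sum_mul_neg, hc.mul_pow, Module.End.mul_apply] at hk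
    rw [pow_one] at h1
    rw [h1, geom_const] at hk
    simpa using (congrFun hk 0).symm
  refine ⟨cn 1, fun μ => ?_⟩
  obtain ⟨k, rfl | rfl⟩ := μ.eq_nat_or_neg
  · simpa using hnat k
  · have : cn (-(k : ℤ)) = (-1) ^ n * cn k := by
      rw [← h (-(k : ℤ)) 0, ← h k (n * k), ← Finset.sum_range_reflect, Finset.mul_sum]
      refine Finset.sum_congr rfl fun l hl => ?_
      have hl' : l ≤ n := by simpa [Nat.lt_succ_iff] using hl
      obtain ⟨j, rfl⟩ := Nat.exists_eq_add_of_le hl'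
      have e1 : l + j + 1 - 1 - l = j := by omega
      rw [e1, Nat.choose_symm_add]
      have e2 : (0 : ℤ) - (j : ℤ) * -(k : ℤ) = ((l + j : ℕ) : ℤ) * k - l * k := by
        push_cast
        ring
      have e3 : (-1 : ℂ) ^ (l + j) * (-1) ^ l = (-1) ^ j := by
        rw [pow_add, mul_right_comm, ← mul_pow]
        simp
      rw [e2, ← e3]
      ring
    rw [this, hnat]
    push_cast
    rw [neg_pow (k : ℂ)]
    ring
end

section
/- Let n ≥ 1 and let F₁, F₂ be finite nonnegative Borel measures on [−π, π). For μ ∈ ℤ define G_μ : [−π, π) → ℂ by G_μ(λ) = (1 − e^{−iμλ})^n / (iλ)^n for λ ≠ 0 and G_μ(0) = μ^n. If for all m, μ₁, μ₂ ∈ ℤ one has ∫_{[−π,π)} e^{iλm} G_{μ₁}(λ) conj(G_{μ₂}(λ)) dF₁(λ) = ∫_{[−π,π)} e^{iλm} G_{μ₁}(λ) conj(G_{μ₂}(λ)) dF₂(λ), then F₁ = F₂. -/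
open MeasureTheory

/-- The function `G_μ(λ) = (1 − e^{−iμλ})^n / (iλ)^n`, extended continuously by
`G_μ(0) = μ^n`. -/
noncomputable def Gker (n : ℕ) (μ : ℤ) (lam : ℝ) : ℂ :=
  if lam = 0 then (μ : ℂ) ^ n
  else (1 - Complex.exp (-Complex.I * (μ : ℂ) * (lam : ℂ))) ^ n / (Complex.I * (lam : ℂ)) ^ n

theorem circle_measure_ext {T : ℝ} [Fact (0 < T)] (ν₁ ν₂ : Measure (AddCircle T))
    [IsFiniteMeasure ν₁] [IsFiniteMeasure ν₂]
    (h : ∀ m : ℤ, ∫ x, fourier m x ∂ν₁ = ∫ x, fourier m x ∂ν₂) : ν₁ = ν₂ := by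
  have hint : ∀ (ν : Measure (AddCircle T)) [IsFiniteMeasure ν] (f : C(AddCircle T, ℂ)),
      Integrable f ν := fun ν _ f =>
    f.continuous.integrable_of_hasCompactSupport (HasCompactSupport.of_compactSpace _)
  have hL : ∀ (ν : Measure (AddCircle T)) [IsFiniteMeasure ν],
      ∃ L : C(AddCircle T, ℂ) →L[ℂ] ℂ, ∀ f, L f = ∫ x, f x ∂ν := by
    intro ν _
    refine ⟨LinearMap.mkContinuous
      { toFun := fun f => ∫ x, f x ∂ν
        map_add' := fun f g => integral_add (hint ν f) (hint ν g)
        map_smul' := fun c f => integral_const_mul c _ } (ν.real Set.univ) ?_, fun f => rfl⟩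
    intro f
    have := norm_integral_le_of_norm_le_const (μ := ν) (f := f) (C := ‖f‖)
      (Filter.Eventually.of_forall fun x => f.norm_coe_le_norm x)
    rw [mul_comm]
    exact this
  obtain ⟨L₁, hL₁⟩ := hL ν₁
  obtain ⟨L₂, hL₂⟩ := hL ν₂
  have hLL : L₁ = L₂ := by
    refine ContinuousLinearMap.ext_on (s := Set.range (@fourier T)) ?_ ?_
    · have := @span_fourier_closure_eq_top T _
      exact (Submodule.dense_iff_topologicalClosure_eq_top).2 this
    · rintro _ ⟨m, rfl⟩
      rw [hL₁, hL₂, h]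
  refine ext_of_forall_integral_eq_of_IsFiniteMeasure fun f => ?_
  have h1 := hL₁ ⟨fun x => (f x : ℂ), by fun_prop⟩
  have h2 := hL₂ ⟨fun x => (f x : ℂ), by fun_prop⟩
  rw [hLL, h2] at h1
  simp only [ContinuousMap.coe_mk, integral_complex_ofReal] at h1
  exact_mod_cast h1.symm

theorem real_measure_ext (ν₁ ν₂ : Measure ℝ)
    [IsFiniteMeasure ν₁] [IsFiniteMeasure ν₂]
    (h₁ : ν₁ (Set.Ico (-Real.pi) Real.pi)ᶜ = 0)
    (h₂ : ν₂ (Set.Ico (-Real.pi) Real.pi)ᶜ = 0)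
    (h : ∀ m : ℤ, ∫ x : ℝ, Complex.exp (Complex.I * (x : ℂ) * (m : ℂ)) ∂ν₁
      = ∫ x : ℝ, Complex.exp (Complex.I * (x : ℂ) * (m : ℂ)) ∂ν₂) : ν₁ = ν₂ := by
  have : Fact (0 < 2 * Real.pi) := ⟨Real.two_pi_pos⟩
  let q : ℝ → AddCircle (2 * Real.pi) := fun x => (x : AddCircle (2 * Real.pi))
  have hq : Measurable q := AddCircle.measurable_mk'
  have hmap : ν₁.map q = ν₂.map q := by
    apply circle_measure_ext
    intro m
    rw [integral_map hq.aemeasurable (fourier m).continuous.aestronglyMeasurable,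
      integral_map hq.aemeasurable (fourier m).continuous.aestronglyMeasurable]
    have e : ∀ x : ℝ, fourier m (q x) = Complex.exp (Complex.I * (x : ℂ) * (m : ℂ)) := by
      intro x
      simp only [q]
      rw [fourier_coe_apply]
      congr 1
      have : (Real.pi : ℂ) ≠ 0 := by exact_mod_cast Real.pi_ne_zero
      push_cast
      field_simp
    simp only [e]
    exact h m
  let r : AddCircle (2 * Real.pi) → ℝ :=
    fun y => (AddCircle.equivIco (2 * Real.pi) (-Real.pi) y : ℝ)
  have hr : Measurable r :=
    measurable_subtype_coe.comp (AddCircle.measurableEquivIco (2 * Real.pi) (-Real.pi)).measurable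
  have key : ∀ ν : Measure ℝ, ν (Set.Ico (-Real.pi) Real.pi)ᶜ = 0 → (ν.map q).map r = ν := by
    intro ν hν
    rw [Measure.map_map hr hq]
    have : r ∘ q =ᵐ[ν] id := by
      have h0 : ∀ᵐ x ∂ν, x ∈ Set.Ico (-Real.pi) Real.pi := hν
      filter_upwards [h0] with x hx
      refine AddCircle.equivIco_coe_of_mem (p := 2 * Real.pi) (a := -Real.pi) ?_
      exact ⟨hx.1, by linarith [hx.2]⟩
    rw [Measure.map_congr this, Measure.map_id]
  rw [← key ν₁ h₁, ← key ν₂ h₂, hmap]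

theorem Gker_one_norm_le (n : ℕ) (x : ℝ) : ‖Gker n 1 x‖ ≤ 1 := by
  unfold Gker
  split_ifs with hx
  · simp
  · rw [← div_pow, norm_pow]
    refine pow_le_one₀ (norm_nonneg _) ?_
    rw [norm_div, div_le_one (by simpa using hx)]
    have := Real.norm_exp_I_mul_ofReal_sub_one_le (x := -x)
    rw [norm_sub_rev]
    simpa using this

theorem Gker_one_ne_zero (n : ℕ) (x : ℝ) (hx : x ∈ Set.Ico (-Real.pi) Real.pi) :
    Gker n 1 x ≠ 0 := by
  unfold Gker
  split_ifs with h0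
  · simp
  · refine div_ne_zero (pow_ne_zero _ ?_) (pow_ne_zero _ (by simpa using h0))
    intro h
    have h1 := (sub_eq_zero.1 h).symm
    have h2 : ‖Complex.exp (Complex.I * ((-x : ℝ) : ℂ)) - 1‖ = 0 := by
      rw [norm_eq_zero, sub_eq_zero, ← h1]
      congr 1
      push_cast
      ring
    rw [Complex.norm_exp_I_mul_ofReal_sub_one, norm_eq_zero] at h2
    have h3 : Real.sin (-x / 2) = 0 := by simpa using h2
    have hp := Real.pi_pos
    rw [Real.sin_eq_zero_iff_of_lt_of_lt (by linarith [hx.2]) (by linarith [hx.1])] at h3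
    exact h0 (by linarith)

theorem Gker_measurable (n : ℕ) (μ : ℤ) : Measurable (Gker n μ) := by
  unfold Gker
  refine Measurable.ite (measurableSet_singleton 0) measurable_const ?_
  fun_prop


/-- a finite nonnegative Borel measure `F` on `[−π, π)` is uniquely determined
by the structural function `D(m; μ₁, μ₂) = ∫_{[−π,π)} e^{iλm} G_{μ₁}(λ) conj(G_{μ₂}(λ)) dF(λ)`. -/
theorem spectral_measure_unique (n : ℕ) (hn : 1 ≤ n)
    (F₁ F₂ : Measure ℝ) [IsFiniteMeasure F₁] [IsFiniteMeasure F₂]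
    (hF₁ : F₁ (Set.Ico (-Real.pi) Real.pi)ᶜ = 0)
    (hF₂ : F₂ (Set.Ico (-Real.pi) Real.pi)ᶜ = 0)
    (h : ∀ m μ₁ μ₂ : ℤ,
      (∫ lam in Set.Ico (-Real.pi) Real.pi,
        Complex.exp (Complex.I * (lam : ℂ) * (m : ℂ)) * Gker n μ₁ lam
          * (starRingEnd ℂ) (Gker n μ₂ lam) ∂F₁)
      = ∫ lam in Set.Ico (-Real.pi) Real.pi,
        Complex.exp (Complex.I * (lam : ℂ) * (m : ℂ)) * Gker n μ₁ lam
          * (starRingEnd ℂ) (Gker n μ₂ lam) ∂F₂) :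
    F₁ = F₂ := by
  let w : ℝ → NNReal := fun x => ‖Gker n 1 x‖₊ ^ 2
  have hw : Measurable w := (Gker_measurable n 1).nnnorm.pow_const 2
  have hw' : Measurable fun x => (w x : ENNReal) := hw.coe_nnreal_ennreal
  have hfin : ∀ F : Measure ℝ, IsFiniteMeasure F →
      IsFiniteMeasure (F.withDensity fun x => (w x : ENNReal)) := by
    intro F _
    refine isFiniteMeasure_withDensity (ne_of_lt ?_)
    refine lt_of_le_of_lt (lintegral_mono (g := fun _ => 1) fun x => ?_) (by simp)
    have : ‖Gker n 1 x‖₊ ≤ 1 := Gker_one_norm_le n x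
    have h2 : w x ≤ 1 := pow_le_one₀ zero_le this
    exact ENNReal.coe_le_one_iff.2 h2
  have hac : ∀ F : Measure ℝ, F (Set.Ico (-Real.pi) Real.pi)ᶜ = 0 →
      (F.withDensity fun x => (w x : ENNReal)) (Set.Ico (-Real.pi) Real.pi)ᶜ = 0 :=
    fun F hF => withDensity_absolutelyContinuous F _ hF
  have hI : ∀ F : Measure ℝ, F (Set.Ico (-Real.pi) Real.pi)ᶜ = 0 → ∀ m : ℤ,
      ∫ x : ℝ, Complex.exp (Complex.I * (x : ℂ) * (m : ℂ))
        ∂(F.withDensity fun x => (w x : ENNReal)) =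
      ∫ lam in Set.Ico (-Real.pi) Real.pi,
        Complex.exp (Complex.I * (lam : ℂ) * (m : ℂ)) * Gker n 1 lam
          * (starRingEnd ℂ) (Gker n 1 lam) ∂F := by
    intro F hF m
    have h0 : ∀ᵐ x ∂F, x ∈ Set.Ico (-Real.pi) Real.pi := hF
    rw [integral_withDensity_eq_integral_smul hw, Measure.restrict_eq_self_of_ae_mem h0]
    congr 1
    ext x
    rw [mul_assoc _ (Gker n 1 x), Complex.mul_conj, Complex.normSq_eq_norm_sq]
    simp [w, NNReal.smul_def]
    ring
  have := hfin F₁ inferInstance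
  have := hfin F₂ inferInstance
  have hE := real_measure_ext _ _ (hac F₁ hF₁) (hac F₂ hF₂) fun m => by
    rw [hI F₁ hF₁, hI F₂ hF₂]
    exact h m 1 1
  have inv : ∀ F : Measure ℝ, F (Set.Ico (-Real.pi) Real.pi)ᶜ = 0 →
      (F.withDensity fun x => (w x : ENNReal)).withDensity (fun x => (w x : ENNReal))⁻¹ = F := by
    intro F hF
    have h0 : ∀ᵐ x ∂F, x ∈ Set.Ico (-Real.pi) Real.pi := hF
    refine withDensity_inv_same hw' ?_ (by simp)
    filter_upwards [h0] with x hx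
    simpa [w] using fun h => absurd h (Gker_one_ne_zero n x hx)
  rw [← inv F₁ hF₁, ← inv F₂ hF₂, hE]
end

section
/- Let n ≥ 1, μ ≥ 1, N ≥ 0, T ≥ 1. Let d_μ(k), k ≥ 0, be defined by the power series identity Σ_{k=0}^{∞} d_μ(k) x^k = (Σ_{j=0}^{∞} x^{μj})^n. Given vectors a(0), …, a(N) ∈ ℂ^T, define b(k) = Σ_{m=k}^{N} d_μ(m − k) · a(m) for 0 ≤ k ≤ N, and for −μn ≤ k ≤ −1 define v(k) = Σ_{l} (−1)^l C(n,l) b(lμ + k), where the sum is over integers l with 0 ≤ l ≤ n and 0 ≤ lμ + k ≤ N. Then for every sequence ζ : ℤ → ℂ^T one has Σ_{k=0}^{N} a(k)ᵀ ζ(k) = Σ_{k=0}^{N} b(k)ᵀ ζ^{(n)}(k, μ) − Σ_{k=−μn}^{−1} v(k)ᵀ ζ(k), where ζ^{(n)}(k, μ) = Σ_{l=0}^{n} (−1)^l C(n,l) ζ(k − lμ) and xᵀy denotes the bilinear (non-conjugated) dot product on ℂ^T. -/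
open Finset in
theorem fd_coeff (n μ : ℕ) (hμ : 1 ≤ μ) (d : ℕ → ℂ)
    (hd : PowerSeries.mk d
        = (PowerSeries.mk (fun j => if μ ∣ j then (1 : ℂ) else 0)) ^ n) (m : ℕ) :
    ∑ l ∈ range (n + 1), ((-1 : ℂ) ^ l * (n.choose l : ℂ)) *
      (if l * μ ≤ m then d (m - l * μ) else 0) = if m = 0 then 1 else 0 := by
  have h1 : (1 - (PowerSeries.X : PowerSeries ℂ) ^ μ) *
      (PowerSeries.mk (fun j => if μ ∣ j then (1 : ℂ) else 0)) = 1 := by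
    ext k
    rw [sub_mul, one_mul, map_sub, PowerSeries.coeff_X_pow_mul', PowerSeries.coeff_mk,
      PowerSeries.coeff_one]
    by_cases hk : μ ≤ k
    · have h0 : k ≠ 0 := by omega
      simp [hk, h0, PowerSeries.coeff_mk, Nat.dvd_sub_iff_left hk (dvd_refl μ)]
    · by_cases h0 : k = 0
      · subst h0; simp; omega
      · have : ¬ μ ∣ k := fun h => hk (Nat.le_of_dvd (by omega) h)
        simp [hk, h0, this]
  have h2 : (1 - (PowerSeries.X : PowerSeries ℂ) ^ μ) ^ n * PowerSeries.mk d = 1 := by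
    rw [hd, ← mul_pow, h1, one_pow]
  have h3 : (1 - (PowerSeries.X : PowerSeries ℂ) ^ μ) ^ n =
      ∑ l ∈ range (n + 1), PowerSeries.C ((-1 : ℂ) ^ l * (n.choose l : ℂ)) *
        PowerSeries.X ^ (l * μ) := by
    rw [sub_eq_neg_add, add_pow]
    refine sum_congr rfl fun l _ => ?_
    rw [neg_pow, ← pow_mul, mul_comm μ l]
    simp
    ring
  have h4 := congrArg (PowerSeries.coeff m) h2
  rw [h3, sum_mul, map_sum, PowerSeries.coeff_one] at h4
  rw [← h4]
  refine sum_congr rfl fun l _ => ?_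
  rw [mul_assoc (PowerSeries.C _), PowerSeries.coeff_C_mul, PowerSeries.coeff_X_pow_mul']
  simp

open Finset in
theorem fd_inv (n μ N T : ℕ) (hμ : 1 ≤ μ) (d : ℕ → ℂ)
    (hd : PowerSeries.mk d
        = (PowerSeries.mk (fun j => if μ ∣ j then (1 : ℂ) else 0)) ^ n)
    (a b : ℕ → Fin T → ℂ)
    (hb : ∀ k, k ≤ N → b k = ∑ m ∈ Finset.Icc k N, d (m - k) • a m) (j : ℕ) (hj : j ≤ N) :
    ∑ l ∈ range (n + 1), ((-1 : ℂ) ^ l * (n.choose l : ℂ)) •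
      (if l * μ + j ≤ N then b (l * μ + j) else 0) = a j := by
  have h1 : ∀ l, (if l * μ + j ≤ N then b (l * μ + j) else 0) =
      ∑ m ∈ Icc j N, (if l * μ ≤ m - j then d (m - j - l * μ) else 0) • a m := by
    intro l
    have e : ∀ m ∈ Icc j N, (if l * μ ≤ m - j then d (m - j - l * μ) else 0) • a m =
        if l * μ + j ≤ m then d (m - (l * μ + j)) • a m else 0 := by
      intro m hm
      rw [mem_Icc] at hm
      by_cases h : l * μ + j ≤ m
      · rw [if_pos h, if_pos (by omega)]
        congr 2
        omega
      · rw [if_neg h, if_neg (by omega), zero_smul]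
    rw [sum_congr rfl e, ← sum_filter]
    split_ifs with h
    · rw [hb _ h]
      refine sum_congr ?_ fun _ _ => rfl
      ext m
      simp only [mem_Icc, mem_filter]
      omega
    · symm
      apply sum_eq_zero
      intro m hm
      simp only [mem_Icc, mem_filter] at hm
      omega
  simp_rw [h1, smul_sum, smul_smul]
  rw [sum_comm]
  simp_rw [← sum_smul, fd_coeff n μ hμ d hd]
  rw [sum_eq_single j]
  · simp
  · intro m hm hmj
    rw [mem_Icc] at hm
    rw [if_neg (by omega), zero_smul]
  · intro h
    exact absurd (mem_Icc.2 ⟨le_refl _, hj⟩) h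

open Finset in
theorem fd_shift (n μ N l : ℕ) (hl : l ≤ n) (f : ℕ → ℤ → ℂ) :
    ∑ k ∈ range (N + 1), f k ((k : ℤ) - l * μ) =
      ∑ j ∈ Ico (-((μ : ℤ) * n)) (N + 1),
        if 0 ≤ (l : ℤ) * μ + j ∧ (l : ℤ) * μ + j ≤ N then f ((l : ℤ) * μ + j).toNat j else 0 := by
  have hle : (l : ℤ) * μ ≤ μ * n := by
    rw [mul_comm]; gcongr
  have hp : 0 ≤ (l : ℤ) * μ := by positivity
  rw [← sum_filter]
  refine sum_bij' (fun k _ => (k : ℤ) - l * μ) (fun j _ => ((l : ℤ) * μ + j).toNat) ?_ ?_ ?_ ?_ ?_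
  · intro k hk
    simp only [mem_range, mem_filter, mem_Ico] at *
    omega
  · intro k hk
    simp only [mem_range, mem_filter, mem_Ico] at *
    omega
  · intro k hk
    simp
  · intro k hk
    simp only [mem_filter, mem_Ico] at *
    omega
  · intro k hk
    simp

/-- Lemma 3.1, pathwise: with `d_μ` defined by
`Σ_{k≥0} d_μ(k) x^k = (Σ_{j≥0} x^{μj})^n`, `b(k) = Σ_{m=k}^{N} d_μ(m−k) a(m)` and
`v(k) = Σ_{0 ≤ l ≤ n, 0 ≤ lμ+k ≤ N} (−1)^l C(n,l) b(lμ+k)` for `−μn ≤ k ≤ −1`, one has, for every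
sequence `ζ : ℤ → ℂ^T`,
`Σ_{k=0}^{N} a(k)ᵀ ζ(k) = Σ_{k=0}^{N} b(k)ᵀ ζ^{(n)}(k,μ) − Σ_{k=−μn}^{−1} v(k)ᵀ ζ(k)`,
where `ζ^{(n)}(k,μ) = Σ_{l=0}^{n} (−1)^l C(n,l) ζ(k − lμ)`. -/
theorem functional_decomposition (n μ N T : ℕ) (hn : 1 ≤ n) (hμ : 1 ≤ μ) (hT : 1 ≤ T)
    (d : ℕ → ℂ)
    (hd : PowerSeries.mk d
        = (PowerSeries.mk (fun j => if μ ∣ j then (1 : ℂ) else 0)) ^ n)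
    (a b : ℕ → Fin T → ℂ)
    (hb : ∀ k, k ≤ N → b k = ∑ m ∈ Finset.Icc k N, d (m - k) • a m)
    (v : ℤ → Fin T → ℂ)
    (hv : ∀ k : ℤ, -((μ : ℤ) * n) ≤ k → k ≤ -1 →
      v k = ∑ l ∈ (Finset.range (n + 1)).filter
              (fun l : ℕ => 0 ≤ (l : ℤ) * μ + k ∧ (l : ℤ) * μ + k ≤ (N : ℤ)),
            ((-1 : ℂ) ^ l * (n.choose l : ℂ)) • b ((((l : ℤ)) * μ + k).toNat))
    (ζ : ℤ → Fin T → ℂ) :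
    ∑ k ∈ Finset.range (N + 1), dotProduct (a k) (ζ (k : ℤ))
      = ∑ k ∈ Finset.range (N + 1),
          dotProduct (b k)
            (∑ l ∈ Finset.range (n + 1),
              ((-1 : ℂ) ^ l * (n.choose l : ℂ)) • ζ ((k : ℤ) - (l : ℤ) * μ))
        - ∑ k ∈ Finset.Ico (-((μ : ℤ) * n)) 0, dotProduct (v k) (ζ k) := by
  classical
  have hS : ∑ k ∈ Finset.range (N + 1),
          dotProduct (b k)
            (∑ l ∈ Finset.range (n + 1),
              ((-1 : ℂ) ^ l * (n.choose l : ℂ)) • ζ ((k : ℤ) - (l : ℤ) * μ))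
      = ∑ j ∈ Finset.Ico (-((μ : ℤ) * n)) (N + 1), dotProduct
          (∑ l ∈ Finset.range (n + 1), ((-1 : ℂ) ^ l * (n.choose l : ℂ)) •
            (if 0 ≤ (l : ℤ) * μ + j ∧ (l : ℤ) * μ + j ≤ N then b ((l : ℤ) * μ + j).toNat else 0))
          (ζ j) := by
    simp_rw [dotProduct_sum, sum_dotProduct, dotProduct_smul, smul_dotProduct]
    rw [Finset.sum_comm]
    conv_rhs => rw [Finset.sum_comm]
    refine Finset.sum_congr rfl fun l hl => ?_
    rw [← Finset.smul_sum, ← Finset.smul_sum,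
      fd_shift n μ N l (by simpa [Nat.lt_succ_iff] using hl) (fun k j => dotProduct (b k) (ζ j))]
    congr 1
    refine Finset.sum_congr rfl fun j _ => ?_
    split_ifs <;> simp
  have hneg : -((μ : ℤ) * n) ≤ 0 := by
    have : 0 ≤ (μ : ℤ) * n := by positivity
    omega
  rw [hS, ← Finset.Ico_union_Ico_eq_Ico hneg (by omega : (0 : ℤ) ≤ N + 1),
    Finset.sum_union (Finset.Ico_disjoint_Ico_consecutive _ _ _)]
  have hA : ∑ j ∈ Finset.Ico (-((μ : ℤ) * n)) 0, dotProduct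
          (∑ l ∈ Finset.range (n + 1), ((-1 : ℂ) ^ l * (n.choose l : ℂ)) •
            (if 0 ≤ (l : ℤ) * μ + j ∧ (l : ℤ) * μ + j ≤ N then b ((l : ℤ) * μ + j).toNat else 0))
          (ζ j) = ∑ k ∈ Finset.Ico (-((μ : ℤ) * n)) 0, dotProduct (v k) (ζ k) := by
    refine Finset.sum_congr rfl fun j hj => ?_
    rw [Finset.mem_Ico] at hj
    rw [hv j hj.1 (by omega), Finset.sum_filter]
    congr 1
    refine Finset.sum_congr rfl fun l _ => ?_
    split_ifs <;> simp
  rw [hA, add_sub_cancel_left]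
  refine Finset.sum_bij' (fun k _ => (k : ℤ)) (fun j _ => j.toNat) ?_ ?_ ?_ ?_ ?_
  · intro k hk
    simp only [Finset.mem_range, Finset.mem_Ico] at *
    omega
  · intro k hk
    simp only [Finset.mem_range, Finset.mem_Ico] at *
    omega
  · intro k hk
    simp
  · intro k hk
    simp only [Finset.mem_Ico] at *
    omega
  · intro k hk
    rw [Finset.mem_range] at hk
    congr 1
    rw [← fd_inv n μ N T hμ d hd a b hb k (by omega)]
    refine Finset.sum_congr rfl fun l _ => ?_
    have e : (l : ℤ) * μ + k = ((l * μ + k : ℕ) : ℤ) := by push_cast; rfl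
    rw [e, Int.toNat_natCast]
    congr 1
    by_cases h : l * μ + k ≤ N
    · rw [if_pos h, if_pos ⟨by positivity, by exact_mod_cast h⟩]
    · rw [if_neg h, if_neg]
      rintro ⟨_, h'⟩
      exact h (by exact_mod_cast h')
end
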